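/- arXiv:1602.00294 — 2 statements merged into one kernel-verified Lean document; each statement's English description precedes it below -/
import Mathlib

section
/- Let H₁ and H₂ be complex Hilbert spaces, let T : H₁ → H₂ be a bounded linear operator with Hilbert adjoint T* : H₂ → H₁, and let a, b ∈ ℂ satisfy Re(−a·b) ≥ 0 or Im(a·b) ≠ 0. If ξ_C ∈ H₁ and ξ_I ∈ H₂ satisfy ξ_C + a·T*(ξ_I) = 0 and ξ_I + b·T(ξ_C) = 0, then ξ_C = 0 and ξ_I = 0. -/
/-- Abstract Hilbert-space form of the consistency Lemma 1:
if `Re(-a*b) ≥ 0` or `Im(a*b) ≠ 0`, and `ξ_C + a T* ξ_I = 0`, `ξ_I + b T ξ_C = 0`,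
then both residuals vanish. -/
theorem stmt_0 {H₁ H₂ : Type*}
    [NormedAddCommGroup H₁] [InnerProductSpace ℂ H₁] [CompleteSpace H₁]
    [NormedAddCommGroup H₂] [InnerProductSpace ℂ H₂] [CompleteSpace H₂]
    (T : H₁ →L[ℂ] H₂) (a b : ℂ)
    (hab : 0 ≤ (-(a * b)).re ∨ (a * b).im ≠ 0)
    (ξC : H₁) (ξI : H₂)
    (h1 : ξC + a • (ContinuousLinearMap.adjoint T) ξI = 0)
    (h2 : ξI + b • T ξC = 0) :
    ξC = 0 ∧ ξI = 0 := by
  have hI : ξI = -(b • T ξC) := eq_neg_of_add_eq_zero_left h2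
  have hC : ξC = (a * b) • (ContinuousLinearMap.adjoint T) (T ξC) := by
    rw [hI, map_neg, map_smul, smul_neg, smul_smul] at h1
    exact eq_of_sub_eq_zero (by rwa [sub_eq_add_neg])
  have key : ((‖ξC‖ ^ 2 : ℝ) : ℂ) = a * b * ((‖T ξC‖ ^ 2 : ℝ) : ℂ) := by
    have h := congrArg (inner ℂ ξC) hC
    rw [inner_smul_right, ContinuousLinearMap.adjoint_inner_right,
      inner_self_eq_norm_sq_to_K, inner_self_eq_norm_sq_to_K] at h
    exact_mod_cast h
  have hre : ‖ξC‖ ^ 2 = (a * b).re * ‖T ξC‖ ^ 2 := by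
    simpa only [Complex.re_mul_ofReal, Complex.ofReal_re] using congrArg Complex.re key
  have him : 0 = (a * b).im * ‖T ξC‖ ^ 2 := by
    simpa only [Complex.im_mul_ofReal, Complex.ofReal_im] using congrArg Complex.im key
  have hzero : ‖ξC‖ ^ 2 = 0 := by
    rcases hab with h | h
    · rw [Complex.neg_re] at h
      nlinarith [sq_nonneg ‖ξC‖, mul_nonneg h (sq_nonneg ‖T ξC‖)]
    · rw [hre, (mul_eq_zero.mp him.symm).resolve_left h, mul_zero]
  have hC0 : ξC = 0 := norm_eq_zero.mp (pow_eq_zero_iff two_ne_zero |>.mp hzero)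
  exact ⟨hC0, by rw [hI, hC0, map_zero, smul_zero, neg_zero]⟩
end

section
/- Let R > 1 be a real number, let β_I, β_C ∈ ℂ, and let ω, μ be nonzero real numbers. Then the sequence n ↦ T_C(n)·(1 − n·β_I) / ( i·ω·μ·(1 − n·β_C) ) tends to 1 as n → ∞; that is, T_C(n) ∼ iωμ·(1 − n β_C)/(1 − n β_I) for large n. -/
open Complex

/-- Insulator coefficient `𝔸_I(n) = -n (1 + R^{-2n})` (as a complex number). -/
noncomputable def 𝔸I (R : ℝ) (n : ℕ) : ℂ := -(n : ℂ) * (1 + (R : ℂ) ^ (-(2 * (n : ℤ))))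

/-- Insulator coefficient `𝔹_I(n) = n(n+1)(1 - R^{-2n})` (as a complex number). -/
noncomputable def 𝔹I (R : ℝ) (n : ℕ) : ℂ :=
  (n : ℂ) * ((n : ℂ) + 1) * (1 - (R : ℂ) ^ (-(2 * (n : ℤ))))

/-- Insulator-to-conductor eigenvalue of the iteration operator (Proposition 1):
`T_C(n) = -iωμ (𝔹_I(n)/√(n(n+1)) + β_C √(n(n+1)) 𝔸_I(n)) / (𝔸_I(n) + β_I 𝔹_I(n))`. -/
noncomputable def eigTC (R : ℝ) (βI βC : ℂ) (ω μ : ℝ) (n : ℕ) : ℂ :=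
  -(Complex.I * (ω : ℂ) * (μ : ℂ)) *
      (𝔹I R n / (Real.sqrt ((n : ℝ) * ((n : ℝ) + 1)) : ℂ)
        + βC * (Real.sqrt ((n : ℝ) * ((n : ℝ) + 1)) : ℂ) * 𝔸I R n) /
    (𝔸I R n + βI * 𝔹I R n)

open Filter Topology

/-- If `a` and `b` tend to `1`, then `a n - n β b n` is asymptotic to `1 - n β`. -/
theorem tendsto_sub_mul_div_one_sub_mul (β : ℂ) {a b : ℕ → ℂ}
    (ha : Tendsto a atTop (𝓝 1)) (hb : Tendsto b atTop (𝓝 1)) :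
    Tendsto (fun n : ℕ => (a n - n * β * b n) / (1 - n * β)) atTop (𝓝 1) := by
  rcases eq_or_ne β 0 with rfl | hβ
  · simpa using ha
  have hinv : Tendsto (fun n : ℕ => ((n : ℂ))⁻¹) atTop (𝓝 0) :=
    tendsto_inv_atTop_nhds_zero_nat
  have hlim : Tendsto (fun n : ℕ => (a n * (n : ℂ)⁻¹ - β * b n) / ((n : ℂ)⁻¹ - β))
      atTop (𝓝 ((1 * 0 - β * 1) / (0 - β))) :=
    ((ha.mul hinv).sub (hb.const_mul β)).div (hinv.sub_const β) (by simpa using hβ)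
  have hone : (1 * 0 - β * 1) / (0 - β) = 1 := by
    rw [mul_zero, mul_one, div_self (by simpa using hβ)]
  rw [hone] at hlim
  refine hlim.congr' ?_
  filter_upwards [eventually_ne_atTop 0] with n hn
  have hn' : (n : ℂ) ≠ 0 := Nat.cast_ne_zero.mpr hn
  rw [← mul_div_mul_left _ _ hn']
  congr 1 <;> field_simp

theorem tendsto_zpow_neg_two_mul_nat {R : ℝ} (hR : 1 < R) :
    Tendsto (fun n : ℕ => (R : ℂ) ^ (-(2 * (n : ℤ)))) atTop (𝓝 0) := by
  have hlt : ‖((R : ℂ) ^ 2)⁻¹‖ < 1 := by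
    rw [norm_inv, norm_pow, Complex.norm_real, Real.norm_eq_abs, sq_abs]
    exact inv_lt_one_of_one_lt₀ (one_lt_pow₀ hR two_ne_zero)
  refine (tendsto_pow_atTop_nhds_zero_of_norm_lt_one hlt).congr fun n => ?_
  rw [zpow_neg, zpow_mul, inv_pow]
  norm_cast

theorem tendsto_sqrt_mul_succ_div :
    Tendsto (fun n : ℕ => ((√((n : ℝ) * ((n : ℝ) + 1)) : ℝ) : ℂ) / n) atTop (𝓝 1) := by
  have hinv : Tendsto (fun n : ℕ => √(1 + (n : ℝ)⁻¹)) atTop (𝓝 1) := by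
    simpa using (tendsto_inv_atTop_nhds_zero_nat (𝕜 := ℝ)).const_add 1 |>.sqrt
  have hreal : Tendsto (fun n : ℕ => √((n : ℝ) * ((n : ℝ) + 1)) / n) atTop (𝓝 1) := by
    refine hinv.congr' ?_
    filter_upwards [eventually_gt_atTop 0] with n hn
    have hn' : (0 : ℝ) < n := Nat.cast_pos.mpr hn
    rw [eq_div_iff hn'.ne', ← Real.sqrt_sq hn'.le, ← Real.sqrt_mul (by positivity),
      Real.sqrt_sq hn'.le]
    congr 1
    field_simp
  simpa [Function.comp_def] using (Complex.continuous_ofReal.tendsto 1).comp hreal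

/-- `T_C(n)` with the common factors of numerator and denominator cancelled. -/
theorem eigTC_eq (R : ℝ) (βI βC : ℂ) (ω μ : ℝ) {n : ℕ} (hn : n ≠ 0) :
    eigTC R βI βC ω μ n = Complex.I * ω * μ * ((√((n : ℝ) * ((n : ℝ) + 1)) : ℝ) / n) *
      ((1 - (R : ℂ) ^ (-(2 * (n : ℤ)))) - n * βC * (1 + (R : ℂ) ^ (-(2 * (n : ℤ))))) /
      ((1 + (R : ℂ) ^ (-(2 * (n : ℤ)))) -
        n * βI * ((1 + (n : ℂ)⁻¹) * (1 - (R : ℂ) ^ (-(2 * (n : ℤ)))))) := by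
  have hn' : (n : ℂ) ≠ 0 := Nat.cast_ne_zero.mpr hn
  have hpos : (0 : ℝ) < n := Nat.cast_pos.mpr (Nat.pos_of_ne_zero hn)
  have hsq : ((√((n : ℝ) * ((n : ℝ) + 1)) : ℝ) : ℂ) ^ 2 = n * (n + 1) := by
    rw [← Complex.ofReal_pow, Real.sq_sqrt (by positivity)]
    push_cast
    ring
  have hs : ((√((n : ℝ) * ((n : ℝ) + 1)) : ℝ) : ℂ) ≠ 0 :=
    Complex.ofReal_ne_zero.mpr (Real.sqrt_pos.mpr (by positivity)).ne'
  unfold eigTC 𝔸I 𝔹I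
  generalize ((√((n : ℝ) * ((n : ℝ) + 1)) : ℝ) : ℂ) = s at *
  generalize (R : ℂ) ^ (-(2 * (n : ℤ))) = q
  rw [← hsq, ← mul_div_mul_left _ ((1 + q) - _) (neg_ne_zero.mpr hn')]
  congr 1
  · field_simp
    ring
  · rw [hsq]
    field_simp
    ring

/-- `T_C(n) ∼ iωμ (1 - n β_C)/(1 - n β_I)` as `n → ∞`. -/
theorem stmt_5 (R : ℝ) (hR : 1 < R) (βI βC : ℂ) (ω μ : ℝ) (hω : ω ≠ 0) (hμ : μ ≠ 0) :
    Filter.Tendsto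
      (fun n : ℕ => eigTC R βI βC ω μ n * (1 - (n : ℂ) * βI) /
        (Complex.I * (ω : ℂ) * (μ : ℂ) * (1 - (n : ℂ) * βC)))
      Filter.atTop (nhds 1) := by
  have hq := tendsto_zpow_neg_two_mul_nat hR
  have hsub : Tendsto (fun n : ℕ => 1 - (R : ℂ) ^ (-(2 * (n : ℤ)))) atTop (𝓝 1) := by
    simpa using hq.const_sub 1
  have hadd : Tendsto (fun n : ℕ => 1 + (R : ℂ) ^ (-(2 * (n : ℤ)))) atTop (𝓝 1) := by
    simpa using hq.const_add 1
  have hshift : Tendsto (fun n : ℕ => (1 + (n : ℂ)⁻¹) * (1 - (R : ℂ) ^ (-(2 * (n : ℤ)))))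
      atTop (𝓝 1) := by
    simpa using ((tendsto_inv_atTop_nhds_zero_nat (𝕜 := ℂ)).const_add 1).mul hsub
  have hlim := (tendsto_sqrt_mul_succ_div.mul
    (tendsto_sub_mul_div_one_sub_mul βC hsub hadd)).mul
    ((tendsto_sub_mul_div_one_sub_mul βI hadd hshift).inv₀ one_ne_zero)
  rw [inv_one, mul_one, mul_one] at hlim
  refine hlim.congr' ?_
  filter_upwards [eventually_ne_atTop 0] with n hn
  have hc : Complex.I * (ω : ℂ) * (μ : ℂ) ≠ 0 := by simp [hω, hμ]
  rw [eigTC_eq R βI βC ω μ hn, inv_div, ← mul_div_mul_left _ (1 - (n : ℂ) * βC) hc]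
  ring
end
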